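/- arXiv:math/0009018 — 2 statements merged into one kernel-verified Lean document; each statement's English description precedes it below -/
import Mathlib

section
/- Suppose the rate-distortion function R(D) is differentiable and strictly convex on (0, D_max), and suppose there exist distinct points x_0, x_1, …, x_k in I such that either (a) for all 0 ≤ i ≠ j ≤ k with j ≠ 0 one has r_j(x_j) > r_j(x_i), or (b) for every permutation π of {0, 1, …, k} other than the identity, Σ_{j=0}^k r_j(x_j) ≠ Σ_{j=0}^k r_j(x_{π(j)}). Then the set of D ∈ (0, D_max) at which the degeneracy condition holds is finite. -/
open Real MeasureTheory Finset
open scoped Classical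

/-- `Q` is a probability mass function on `Fin k`. -/
def IsPmf {k : ℕ} (Q : Fin k → ℝ) : Prop := (∀ j, 0 ≤ Q j) ∧ ∑ j, Q j = 1

/-- `Λ_{P,Q}(λ) = E_P[ln Σ_j Q_j e^{λ ρ(X,a_j)}]`. -/
noncomputable def Lam {k : ℕ} (P : Measure ℝ) (ρ : ℝ → Fin k → ℝ)
    (Q : Fin k → ℝ) (l : ℝ) : ℝ :=
  ∫ x, Real.log (∑ j, Q j * Real.exp (l * ρ x j)) ∂P

/-- The cost `∫ Σ_j W(x)({a_j}) log₂ (W(x)({a_j}) / Q_j) dP(x)` of a Markov kernel,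
with the conventions `0 · log 0 = 0` (automatic in Lean) and value `⊤` if on a set of
positive `P`-measure `w x j > 0` for some `j` with `Q j = 0`. -/
noncomputable def wCost {k : ℕ} (P : Measure ℝ) (Q : Fin k → ℝ)
    (w : ℝ → Fin k → ℝ) : EReal :=
  if ∀ᵐ x ∂P, ∀ j, 0 < w x j → 0 < Q j then
    ((∫ x, ∑ j, w x j * Real.logb 2 (w x j / Q j) ∂P : ℝ) : EReal)
  else ⊤

/-- `R(P,Q,D)`: infimum over Markov kernels `w` from `ℝ` to `Fin k` with
`∫ Σ_j w x j ρ(x,a_j) dP ≤ D` of the relative-entropy cost. -/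
noncomputable def RPQ {k : ℕ} (P : Measure ℝ) (ρ : ℝ → Fin k → ℝ)
    (Q : Fin k → ℝ) (D : ℝ) : EReal :=
  ⨅ w ∈ {w : ℝ → Fin k → ℝ | Measurable w ∧ (∀ x j, 0 ≤ w x j) ∧
      (∀ x, ∑ j, w x j = 1) ∧ ∫ x, ∑ j, w x j * ρ x j ∂P ≤ D}, wCost P Q w

/-- The rate-distortion function `R(D) = inf_Q R(P,Q,D)`. -/
noncomputable def RofD {k : ℕ} (P : Measure ℝ) (ρ : ℝ → Fin k → ℝ) (D : ℝ) : EReal :=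
  ⨅ Q ∈ {Q : Fin k → ℝ | IsPmf Q}, RPQ P ρ Q D

/-- `D_max = min_j E_P[ρ(X,a_j)]`. -/
noncomputable def Dmax {k : ℕ} (P : Measure ℝ) (ρ : ℝ → Fin k → ℝ) : ℝ :=
  sInf (Set.range fun j => ∫ x, ρ x j ∂P)

/-- The degeneracy condition at distortion level `D`: there are a pmf `Q*` achieving
`R(P,Q*,D) = R(D)` and `λ* < 0` with `Λ'_{P,Q*}(λ*) = D`,
`λ*·D − Λ_{P,Q*}(λ*) = (ln 2)·R(D)`, and `x ↦ Σ_j Q*_j e^{λ* ρ(x,a_j)}` constant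
for `P`-almost every `x`. -/
def DegenAt {k : ℕ} (P : Measure ℝ) (ρ : ℝ → Fin k → ℝ) (D : ℝ) : Prop :=
  ∃ Q : Fin k → ℝ, IsPmf Q ∧ RPQ P ρ Q D = RofD P ρ D ∧
    ∃ l : ℝ, l < 0 ∧ HasDerivAt (Lam P ρ Q) D l ∧
      ((l * D - Lam P ρ Q l : ℝ) : EReal) = (Real.log 2 : EReal) * RofD P ρ D ∧
      ∃ c : ℝ, ∀ᵐ x ∂P, ∑ j, Q j * Real.exp (l * ρ x j) = c


lemma aux_rolle (f f' : ℝ → ℝ) (hf : ∀ t, HasDerivAt f (f' t) t) (hfin : {t | f' t = 0}.Finite) :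
    {t | f t = 0}.Finite := by
  have key : ∀ s t, f s = 0 → f t = 0 → s < t →
      #{z ∈ hfin.toFinset | z < s} < #{z ∈ hfin.toFinset | z < t} := by
    intro s t hs ht hst
    obtain ⟨z, hz, hz0⟩ := exists_hasDerivAt_eq_zero (f := f) (f' := f') hst
      (fun x _ => (hf x).continuousAt.continuousWithinAt) (by rw [hs, ht]) (fun x _ => hf x)
    apply Finset.card_lt_card
    rw [Finset.ssubset_iff_of_subset]
    · refine ⟨z, ?_, ?_⟩
      · simp [hz0, hz.2]
      · simp [hz.1.le]
    · intro w hw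
      simp only [Finset.mem_filter] at hw ⊢
      exact ⟨hw.1, hw.2.trans hst⟩
  apply Set.Finite.of_finite_image (f := fun t => #{z ∈ hfin.toFinset | z < t})
  · apply (Set.finite_Iic (#hfin.toFinset)).subset
    rintro _ ⟨t, _, rfl⟩
    exact Finset.card_le_card (Finset.filter_subset _ _)
  · intro s hs t ht hst
    rcases lt_trichotomy s t with h | h | h
    · exact absurd hst (key s t hs ht h).ne
    · exact h
    · exact absurd hst.symm (key t s ht hs h).ne

lemma aux_exp (S : Finset ℝ) : ∀ (c : ℝ → ℝ), {t : ℝ | ∑ b ∈ S, c b * exp (t * b) = 0}.Infinite →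
    ∀ b ∈ S, c b = 0 := by
  induction S using Finset.induction_on with
  | empty => simp
  | insert b0 S hb0 ih =>
    intro c hinf
    have h1 : {t : ℝ | ∑ b ∈ S, (c b * (b - b0)) * exp (t * b) = 0}.Infinite := by
      intro hfin
      apply hinf
      have := aux_rolle (fun t => c b0 + ∑ b ∈ S, c b * exp (t * (b - b0)))
        (fun t => ∑ b ∈ S, c b * (exp (t * (b - b0)) * (b - b0))) (by
          intro t
          apply HasDerivAt.const_add
          apply HasDerivAt.fun_sum
          intro b _
          apply HasDerivAt.const_mul
          apply HasDerivAt.exp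
          simpa using (hasDerivAt_id t).mul_const (b - b0)) (by
          apply hfin.subset
          intro t ht
          simp only [Set.mem_ofPred_eq] at ht ⊢
          have : ∑ b ∈ S, c b * (b - b0) * exp (t * b) =
            exp (t * b0) * ∑ b ∈ S, c b * (exp (t * (b - b0)) * (b - b0)) := by
            rw [Finset.mul_sum]
            apply Finset.sum_congr rfl
            intro b _
            rw [show t * b = t * b0 + t * (b - b0) by ring, exp_add]; ring
          rw [this, ht, mul_zero])
      apply this.subset
      intro t ht
      simp only [Set.mem_ofPred_eq] at ht ⊢
      rw [Finset.sum_insert hb0] at ht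
      have h2 : c b0 * exp (t * b0) + ∑ b ∈ S, c b * exp (t * b) =
            exp (t * b0) * (c b0 + ∑ b ∈ S, c b * exp (t * (b - b0))) := by
        rw [mul_add, Finset.mul_sum]
        congr 1
        · ring
        apply Finset.sum_congr rfl
        intro b _
        rw [show t * b = t * b0 + t * (b - b0) by ring, exp_add]; ring
      rw [h2] at ht
      exact (mul_eq_zero.mp ht).resolve_left (exp_pos _).ne'
    have h3 := ih _ h1
    have h4 : ∀ b ∈ S, c b = 0 := by
      intro b hb
      refine (mul_eq_zero.mp (h3 b hb)).resolve_right ?_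
      intro h
      rw [sub_eq_zero.mp h] at hb
      exact hb0 hb
    obtain ⟨t, ht⟩ := hinf.nonempty
    simp only [Set.mem_ofPred_eq] at ht
    rw [Finset.sum_insert hb0, Finset.sum_eq_zero (fun b hb => by rw [h4 b hb, zero_mul]),
      add_zero] at ht
    intro b hb
    rcases Finset.mem_insert.mp hb with rfl | hb
    · exact (mul_eq_zero.mp ht).resolve_right (exp_pos _).ne'
    · exact h4 b hb

lemma aux_det {n : ℕ} (B : Matrix (Fin n) (Fin n) ℝ)
    (hB : ∀ σ : Equiv.Perm (Fin n), σ ≠ 1 → ∑ j, B j j ≠ ∑ j, B (σ j) j) :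
    {l : ℝ | (Matrix.of fun i j => exp (l * B i j)).det = 0}.Finite := by
  by_contra hinf
  set e : Equiv.Perm (Fin n) → ℝ := fun σ => ∑ j, B (σ j) j with he
  set S : Finset ℝ := Finset.univ.image e with hS
  have hdet : ∀ l : ℝ, (Matrix.of fun i j => exp (l * B i j)).det =
      ∑ b ∈ S, (∑ σ : Equiv.Perm (Fin n) with e σ = b, ((Equiv.Perm.sign σ : ℤ) : ℝ)) * exp (l * b) := by
    intro l
    rw [Matrix.det_apply', ← Finset.sum_fiberwise_of_maps_to (s := Finset.univ) (t := S) (g := e)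
      (fun σ _ => Finset.mem_image_of_mem _ (Finset.mem_univ _))]
    apply Finset.sum_congr rfl
    intro b _
    rw [Finset.sum_mul]
    apply Finset.sum_congr rfl
    intro σ hσ
    simp only [Finset.mem_filter] at hσ
    rw [← hσ.2]
    simp only [Matrix.of_apply, he, Finset.mul_sum, Real.exp_sum]
  have h1 := aux_exp S (fun b => ∑ σ : Equiv.Perm (Fin n) with e σ = b, ((Equiv.Perm.sign σ : ℤ) : ℝ))
    (by
      intro h
      apply hinf
      simpa only [hdet] using h) (e 1) (Finset.mem_image_of_mem _ (Finset.mem_univ _))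
  have h2 : (Finset.univ.filter fun σ : Equiv.Perm (Fin n) => e σ = e 1) = {1} := by
    ext σ
    simp only [Finset.mem_filter, Finset.mem_univ, true_and, Finset.mem_singleton]
    constructor
    · intro h
      by_contra hne
      exact hB σ hne (by simpa [he] using h.symm)
    · rintro rfl; rfl
  simp only [h2] at h1
  simp at h1

lemma aux_pos (P : Measure ℝ) (a b : ℝ)
    (g : ℝ → ℝ) (hg : Measurable g) (hgpos : ∀ x ∈ Set.Ioo a b, 0 < g x)
    (habs : ∀ s ⊆ Set.Ioo a b, MeasurableSet s → ENNReal.ofReal (∫ x in s, g x) ≤ P s)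
    (U : Set ℝ) (hU : IsOpen U) (hsub : U ⊆ Set.Ioo a b) (hne : U.Nonempty) : P U ≠ 0 := by
  intro h0
  have hpos := hU.measure_pos volume hne
  have hun : U = ⋃ n : ℕ, U ∩ {x | g x ≤ n} := by
    ext x
    simp only [Set.mem_iUnion, Set.mem_inter_iff, Set.mem_ofPred_eq, exists_and_left]
    exact ⟨fun h => ⟨h, exists_nat_ge _⟩, fun h => h.1⟩
  apply hpos.ne'
  rw [hun, measure_iUnion_null_iff]
  intro n
  have hm : MeasurableSet (U ∩ {x | g x ≤ n}) :=
    hU.measurableSet.inter (measurableSet_le hg measurable_const)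
  have hs : U ∩ {x | g x ≤ n} ⊆ Set.Ioo a b := fun x hx => hsub hx.1
  have h1 := habs _ hs hm
  have h2 : P (U ∩ {x | g x ≤ n}) = 0 := measure_mono_null Set.inter_subset_left h0
  rw [h2] at h1
  have h3 : ∫ x in U ∩ {x | g x ≤ n}, g x ≤ 0 := by simpa using h1
  have hnn : 0 ≤ᵐ[volume.restrict (U ∩ {x | g x ≤ n})] g := by
    filter_upwards [ae_restrict_mem hm] with x hx using (hgpos x (hs hx)).le
  have hfin : volume (U ∩ {x | g x ≤ n}) < ⊤ := (measure_mono hs).trans_lt (by simp)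
  have hi : IntegrableOn g (U ∩ {x | g x ≤ n}) := by
    apply Measure.integrableOn_of_bounded (M := n) hfin.ne hg.aestronglyMeasurable
    filter_upwards [ae_restrict_mem hm] with x hx
    rw [Real.norm_of_nonneg (hgpos x (hs hx)).le]
    exact hx.2
  by_contra hne0
  have h4 := (setIntegral_pos_iff_support_of_nonneg_ae hnn hi).2 (by
    rw [Set.inter_eq_right.2]
    · exact pos_iff_ne_zero.2 hne0
    · intro x hx
      exact (hgpos x (hs hx)).ne')
  linarith

lemma aux_logterm (w q : ℝ) (hw : 0 ≤ w) (hq : 0 ≤ q) (h : 0 < w → 0 < q) :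
    w - q ≤ w * Real.log (w / q) := by
  rcases hw.eq_or_lt with rfl | hw'
  · simpa using hq
  · have hq' := h hw'
    have h1 := Real.one_sub_inv_le_log_of_pos (div_pos hw' hq')
    have h2 := mul_le_mul_of_nonneg_left h1 hw
    have h3 : w * (1 - (w / q)⁻¹) = w - q := by field_simp
    linarith

lemma aux_kl {k : ℕ} (w Q : Fin k → ℝ) (hw : ∀ j, 0 ≤ w j) (hws : ∑ j, w j = 1) (hQ : IsPmf Q)
    (h : ∀ j, 0 < w j → 0 < Q j) : 0 ≤ ∑ j, w j * Real.logb 2 (w j / Q j) := by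
  have h1 : ∑ j, (w j - Q j) ≤ ∑ j, w j * Real.log (w j / Q j) :=
    Finset.sum_le_sum fun j _ => aux_logterm _ _ (hw j) (hQ.1 j) (h j)
  rw [Finset.sum_sub_distrib, hws, hQ.2, sub_self] at h1
  have h2 : ∑ j, w j * Real.logb 2 (w j / Q j) = (∑ j, w j * Real.log (w j / Q j)) / Real.log 2 := by
    simp only [Real.logb, Finset.sum_div, mul_div_assoc]
  rw [h2]
  exact div_nonneg h1 (Real.log_nonneg (by norm_num))

lemma aux_RofD_nonneg {k : ℕ} (P : Measure ℝ) (ρ : ℝ → Fin k → ℝ) (D : ℝ) : 0 ≤ RofD P ρ D := by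
  unfold RofD RPQ
  refine le_iInf₂ fun Q hQ => le_iInf₂ fun w hw => ?_
  unfold wCost
  split_ifs with h
  · rw [← EReal.coe_zero, EReal.coe_le_coe_iff]
    apply integral_nonneg_of_ae
    filter_upwards [h] with x hx
    exact aux_kl _ _ (hw.2.1 x) (hw.2.2.1 x) hQ hx
  · exact le_top

lemma aux_int (P : Measure ℝ) [IsProbabilityMeasure P] (f : ℝ → ℝ) (hf : Measurable f) (C : ℝ)
    (h : ∀ x, |f x| ≤ C) : Integrable f P :=
  Integrable.of_bound hf.aestronglyMeasurable C (Filter.Eventually.of_forall h)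

/-- pointwise algebra -/
lemma aux_pt {k : ℕ} (p ρ : Fin k → ℝ) (hp : ∀ j, 0 ≤ p j) (hps : ∑ j, p j = 1)
    (M : ℝ) (h0 : ∀ j, 0 ≤ ρ j) (hM : ∀ j, ρ j ≤ M) (m : ℝ) (hm : m = ∑ j, p j * ρ j) :
    0 ≤ m ∧ m ≤ M ∧ (∀ s, ∑ j, p j * (1 + s * (ρ j - m)) = 1) ∧
    (∀ s, ∑ j, p j * (1 + s * (ρ j - m)) * ρ j = m + s * ∑ j, p j * (ρ j - m) ^ 2) ∧
    (∀ s, ∑ j, p j * (1 + s * (ρ j - m)) * (s * (ρ j - m)) = s ^ 2 * ∑ j, p j * (ρ j - m) ^ 2) := by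
  have e1 : ∑ j, p j * (ρ j - m) = 0 := by
    simp only [mul_sub, Finset.sum_sub_distrib, ← Finset.sum_mul, hps, ← hm]; ring
  refine ⟨?_, ?_, ?_, ?_, ?_⟩
  · rw [hm]; exact Finset.sum_nonneg fun j _ => mul_nonneg (hp j) (h0 j)
  · calc m ≤ ∑ j, p j * M := by
          rw [hm]; exact Finset.sum_le_sum fun j _ => mul_le_mul_of_nonneg_left (hM j) (hp j)
      _ = M := by rw [← Finset.sum_mul, hps, one_mul]
  · intro s
    calc _ = ∑ j, p j + s * ∑ j, p j * (ρ j - m) := by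
          rw [Finset.mul_sum, ← Finset.sum_add_distrib]
          exact Finset.sum_congr rfl fun j _ => by ring
      _ = 1 := by rw [hps, e1]; ring
  · intro s
    calc _ = ∑ j, p j * ρ j + s * (∑ j, p j * (ρ j - m) ^ 2) + s * m * ∑ j, p j * (ρ j - m) := by
          rw [Finset.mul_sum, Finset.mul_sum, ← Finset.sum_add_distrib, ← Finset.sum_add_distrib]
          exact Finset.sum_congr rfl fun j _ => by ring
      _ = _ := by rw [← hm, e1]; ring
  · intro s
    calc _ = s * ∑ j, p j * (ρ j - m) + s ^ 2 * ∑ j, p j * (ρ j - m) ^ 2 := by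
          rw [Finset.mul_sum, Finset.mul_sum, ← Finset.sum_add_distrib]
          exact Finset.sum_congr rfl fun j _ => by ring
      _ = _ := by rw [e1]; ring

lemma aux_cost {k : ℕ} (p ρ Q : Fin k → ℝ) (hQ : IsPmf Q) (l Z : ℝ) (hZ : 0 < Z)
    (hpd : ∀ j, p j = Q j * Real.exp (l * ρ j) / Z) (hps : ∑ j, p j = 1)
    (M : ℝ) (h0 : ∀ j, 0 ≤ ρ j) (hM : ∀ j, ρ j ≤ M) (m : ℝ) (hm : m = ∑ j, p j * ρ j)
    (s : ℝ) (hs : |s| * M < 1) :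
    (∀ j, 0 < 1 + s * (ρ j - m)) ∧
    ∑ j, p j * (1 + s * (ρ j - m)) * Real.logb 2 (p j * (1 + s * (ρ j - m)) / Q j) ≤
      (l * (m + s * ∑ j, p j * (ρ j - m) ^ 2) - Real.log Z + s ^ 2 * ∑ j, p j * (ρ j - m) ^ 2)
        / Real.log 2 := by
  have hp : ∀ j, 0 ≤ p j := fun j => by
    rw [hpd]; exact div_nonneg (mul_nonneg (hQ.1 j) (Real.exp_pos _).le) hZ.le
  obtain ⟨m0, mM, e1, e2, e3⟩ := aux_pt p ρ hp hps M h0 hM m hm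
  have hpos : ∀ j, 0 < 1 + s * (ρ j - m) := by
    intro j
    have h1 : |s * (ρ j - m)| ≤ |s| * M := by
      rw [abs_mul]
      apply mul_le_mul_of_nonneg_left _ (abs_nonneg s)
      rw [abs_le]; constructor <;> linarith [h0 j, hM j]
    have := (abs_le.1 h1).1
    linarith
  refine ⟨hpos, ?_⟩
  have h2 : ∑ j, p j * (1 + s * (ρ j - m)) * Real.logb 2 (p j * (1 + s * (ρ j - m)) / Q j) =
      (∑ j, p j * (1 + s * (ρ j - m)) * Real.log (p j * (1 + s * (ρ j - m)) / Q j)) / Real.log 2 := by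
    simp only [Real.logb, Finset.sum_div, mul_div_assoc]
  rw [h2]
  apply div_le_div_of_nonneg_right _ (Real.log_nonneg (by norm_num))
  calc _ ≤ ∑ j, p j * (1 + s * (ρ j - m)) * (l * ρ j - Real.log Z + s * (ρ j - m)) := by
        apply Finset.sum_le_sum
        intro j _
        apply mul_le_mul_of_nonneg_left _ (mul_nonneg (hp j) (hpos j).le) |>.trans_eq' _
        · exact if Q j = 0 then l * ρ j - Real.log Z + s * (ρ j - m) else
            Real.log (p j * (1 + s * (ρ j - m)) / Q j)
        · split_ifs with hq
          · exact le_rfl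
          · have hq' : 0 < Q j := lt_of_le_of_ne (hQ.1 j) (Ne.symm hq)
            have : p j * (1 + s * (ρ j - m)) / Q j =
                Real.exp (l * ρ j) / Z * (1 + s * (ρ j - m)) := by
              rw [hpd]; field_simp
            rw [this, Real.log_mul (by positivity) (hpos j).ne', Real.log_div (by positivity) hZ.ne',
              Real.log_exp]
            have := Real.log_le_sub_one_of_pos (hpos j)
            linarith
        · split_ifs with hq
          · simp [hpd, hq]
          · rfl
    _ = l * (∑ j, p j * (1 + s * (ρ j - m)) * ρ j) - Real.log Z * ∑ j, p j * (1 + s * (ρ j - m))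
        + ∑ j, p j * (1 + s * (ρ j - m)) * (s * (ρ j - m)) := by
          rw [Finset.mul_sum, Finset.mul_sum, ← Finset.sum_sub_distrib, ← Finset.sum_add_distrib]
          exact Finset.sum_congr rfl fun j _ => by ring
    _ = _ := by rw [e1, e2, e3]; ring

lemma aux_deriv {k : ℕ} (M : ℝ)
    (ρ : ℝ → Fin k → ℝ) (hρmeas : ∀ j, Measurable fun x => ρ x j)
    (hρnn : ∀ x j, 0 ≤ ρ x j) (hρM : ∀ x j, ρ x j ≤ M)
    (P : Measure ℝ) [IsProbabilityMeasure P] (Q : Fin k → ℝ) (hQ : IsPmf Q) (l D c : ℝ)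
    (hZpos : ∀ x l, 0 < ∑ j, Q j * Real.exp (l * ρ x j))
    (hder : HasDerivAt (Lam P ρ Q) D l)
    (hc : ∀ᵐ x ∂P, ∑ j, Q j * Real.exp (l * ρ x j) = c) :
    D = ∫ x, ∑ j, (Q j * Real.exp (l * ρ x j) / (∑ i, Q i * Real.exp (l * ρ x i))) * ρ x j ∂P := by
  have h := hasDerivAt_integral_of_dominated_loc_of_deriv_le (μ := P) (𝕜 := ℝ) (x₀ := l)
    (s := Set.univ) (bound := fun _ => M)
    (F := fun l x => Real.log (∑ j, Q j * Real.exp (l * ρ x j)))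
    (F' := fun l x => ∑ j, (Q j * Real.exp (l * ρ x j) / (∑ i, Q i * Real.exp (l * ρ x i))) * ρ x j)
    Filter.univ_mem ?_ ?_ ?_ ?_ ?_ ?_
  · exact hder.unique h.2
  · refine Filter.Eventually.of_forall fun l => Measurable.aestronglyMeasurable ?_
    fun_prop
  · apply (integrable_const (Real.log c)).congr
    filter_upwards [hc] with x hx
    rw [hx]
  · apply Measurable.aestronglyMeasurable
    fun_prop
  · refine Filter.Eventually.of_forall fun x t _ => ?_
    obtain ⟨h0, h1, _⟩ := aux_pt (fun j => Q j * Real.exp (t * ρ x j) / (∑ i, Q i * Real.exp (t * ρ x i)))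
      (ρ x) (fun j => div_nonneg (mul_nonneg (hQ.1 j) (Real.exp_pos _).le) (hZpos x t).le)
      (by rw [← Finset.sum_div, div_self (hZpos x t).ne']) M (hρnn x) (hρM x) _ rfl
    rw [Real.norm_of_nonneg h0]
    exact h1
  · exact integrable_const _
  · refine Filter.Eventually.of_forall fun x t _ => ?_
    have h1 : HasDerivAt (fun t => ∑ j, Q j * Real.exp (t * ρ x j))
        (∑ j, Q j * (Real.exp (t * ρ x j) * ρ x j)) t := by
      apply HasDerivAt.fun_sum
      intro j _
      apply HasDerivAt.const_mul
      apply HasDerivAt.exp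
      simpa using (hasDerivAt_id t).mul_const (ρ x j)
    have h2 := h1.log (hZpos x t).ne'
    refine h2.congr_deriv ?_
    rw [Finset.sum_div]
    exact Finset.sum_congr rfl fun j _ => by ring

lemma aux_main {k : ℕ} (M : ℝ)
    (ρ : ℝ → Fin k → ℝ) (hρmeas : ∀ j, Measurable fun x => ρ x j)
    (hρnn : ∀ x j, 0 ≤ ρ x j) (hρM : ∀ x j, ρ x j ≤ M)
    (P : Measure ℝ) [IsProbabilityMeasure P] (Q : Fin k → ℝ) (hQ : IsPmf Q) (l D c : ℝ)
    (hD : D < Dmax P ρ)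
    (hder : HasDerivAt (Lam P ρ Q) D l)
    (hval : ((l * D - Lam P ρ Q l : ℝ) : EReal) = (Real.log 2 : EReal) * RofD P ρ D)
    (hc : ∀ᵐ x ∂P, ∑ j, Q j * Real.exp (l * ρ x j) = c)
    (hdiff : DifferentiableAt ℝ (fun t => (RofD P ρ t).toReal) D) :
    Real.log 2 * deriv (fun t => (RofD P ρ t).toReal) D = l := by
  have hlog2 : 0 < Real.log 2 := Real.log_pos (by norm_num)
  obtain ⟨j0, hj0⟩ : ∃ j, 0 < Q j := by
    by_contra! h
    have h1 := hQ.2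
    have : ∑ j, Q j ≤ 0 := Finset.sum_nonpos fun j _ => h j
    linarith
  have hM0 : 0 ≤ M := (hρnn 0 j0).trans (hρM 0 j0)
  have hZpos : ∀ x l, 0 < ∑ j, Q j * Real.exp (l * ρ x j) := fun x l =>
    Finset.sum_pos' (fun j _ => mul_nonneg (hQ.1 j) (Real.exp_pos _).le)
      ⟨j0, Finset.mem_univ _, mul_pos hj0 (Real.exp_pos _)⟩
  have hDeq := aux_deriv M ρ hρmeas hρnn hρM P Q hQ l D c hZpos hder hc
  set p : ℝ → Fin k → ℝ := fun x j => Q j * Real.exp (l * ρ x j) / (∑ i, Q i * Real.exp (l * ρ x i))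
    with hpdef
  have hpm : ∀ j, Measurable fun x => p x j := by intro j; simp only [hpdef]; fun_prop
  set m : ℝ → ℝ := fun x => ∑ j, p x j * ρ x j with hmdef
  have hmm : Measurable m := by simp only [hmdef]; fun_prop
  have hp0 : ∀ x j, 0 ≤ p x j := fun x j =>
    div_nonneg (mul_nonneg (hQ.1 j) (Real.exp_pos _).le) (hZpos x l).le
  have hps : ∀ x, ∑ j, p x j = 1 := fun x => by
    simp only [hpdef]; rw [← Finset.sum_div, div_self (hZpos x l).ne']
  have hpt := fun x => aux_pt (p x) (ρ x) (hp0 x) (hps x) M (hρnn x) (hρM x) (m x) rfl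
  set v : ℝ → ℝ := fun x => ∑ j, p x j * (ρ x j - m x) ^ 2 with hvdef
  have hvm : Measurable v := by simp only [hvdef]; fun_prop
  have hv0 : ∀ x, 0 ≤ v x := fun x => Finset.sum_nonneg fun j _ => mul_nonneg (hp0 x j) (sq_nonneg _)
  have hvM : ∀ x, v x ≤ M ^ 2 := fun x => by
    calc v x ≤ ∑ j, p x j * M ^ 2 := by
          apply Finset.sum_le_sum
          intro j _
          apply mul_le_mul_of_nonneg_left _ (hp0 x j)
          apply sq_le_sq'
          · linarith [hρnn x j, (hpt x).2.1]
          · linarith [hρM x j, (hpt x).1]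
      _ = M ^ 2 := by rw [← Finset.sum_mul, hps, one_mul]
  have hmi : Integrable m P := aux_int P m hmm M fun x => by
    rw [abs_of_nonneg (hpt x).1]; exact (hpt x).2.1
  have hvi : Integrable v P := aux_int P v hvm (M ^ 2) fun x => by
    rw [abs_of_nonneg (hv0 x)]; exact hvM x
  have hDm : D = ∫ x, m x ∂P := hDeq
  set V : ℝ := ∫ x, v x ∂P with hV
  have hLam : Lam P ρ Q l = Real.log c := by
    unfold Lam
    rw [integral_congr_ae (g := fun _ => Real.log c)]
    · simp
    · filter_upwards [hc] with x hx
      rw [hx]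
  -- the variance is positive
  have hVpos : 0 < V := by
    rcases (integral_nonneg hv0 : 0 ≤ V).eq_or_lt with h | h
    · exfalso
      have h1 : v =ᵐ[P] 0 := (integral_eq_zero_iff_of_nonneg hv0 hvi).1 h.symm
      have h2 : (fun x => ρ x j0) =ᵐ[P] m := by
        filter_upwards [h1] with x hx
        have h3 := (Finset.sum_eq_zero_iff_of_nonneg
          (fun j _ => mul_nonneg (hp0 x j) (sq_nonneg (ρ x j - m x)))).1 hx j0 (Finset.mem_univ _)
        have h4 : 0 < p x j0 := div_pos (mul_pos hj0 (Real.exp_pos _)) (hZpos x l)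
        have h5 := (mul_eq_zero.1 h3).resolve_left h4.ne'
        exact sub_eq_zero.1 (pow_eq_zero_iff (two_ne_zero) |>.1 h5)
      have h3 : ∫ x, ρ x j0 ∂P = D := by rw [integral_congr_ae h2, hDm]
      have h4 : Dmax P ρ ≤ ∫ x, ρ x j0 ∂P :=
        csInf_le (Set.finite_range _).bddBelow ⟨j0, rfl⟩
      linarith
    · exact h
  -- values
  set f : ℝ → ℝ := fun t => (RofD P ρ t).toReal with hf
  have hfD : Real.log 2 * f D = l * D - Real.log c := by
    rw [← hLam]
    have hnn := aux_RofD_nonneg P ρ D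
    simp only [hf]
    generalize RofD P ρ D = R at hval hnn
    induction R with
    | bot => simp at hnn
    | top =>
      rw [EReal.coe_mul_top_of_pos hlog2] at hval
      exact absurd hval (EReal.coe_ne_top _)
    | coe R =>
      rw [← EReal.coe_mul, EReal.coe_eq_coe_iff] at hval
      simp [hval]
  have hub : ∀ s : ℝ, |s| * M < 1 →
      Real.log 2 * f (D + s * V) ≤ l * (D + s * V) - Real.log c + s ^ 2 * V := by
    intro s hs
    set w : ℝ → Fin k → ℝ := fun x j => p x j * (1 + s * (ρ x j - m x)) with hw
    have hcost := fun x => aux_cost (p x) (ρ x) Q hQ l _ (hZpos x l) (fun j => rfl) (hps x) M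
      (hρnn x) (hρM x) (m x) rfl s hs
    have hw0 : ∀ x j, 0 ≤ w x j := fun x j => mul_nonneg (hp0 x j) ((hcost x).1 j).le
    have hwQ : ∀ x j, 0 < w x j → 0 < Q j := by
      intro x j h
      rcases (hQ.1 j).eq_or_lt with h1 | h1
      · simp [hw, hpdef, ← h1] at h
      · exact h1
    have hws : ∀ x, ∑ j, w x j = 1 := fun x => (hpt x).2.2.1 s
    have hle : RofD P ρ (D + s * V) ≤ wCost P Q w := by
      unfold RofD RPQ
      refine (iInf₂_le Q hQ).trans (iInf₂_le w ⟨?_, hw0, hws, ?_⟩)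
      · rw [measurable_pi_iff]; intro j; simp only [hw]; fun_prop
      · apply le_of_eq
        have : ∀ x, ∑ j, w x j * ρ x j = m x + s * v x := fun x => (hpt x).2.2.2.1 s
        simp only [this]
        rw [integral_add hmi (hvi.const_mul s), integral_const_mul, ← hDm]
    have hwc : wCost P Q w ≤ (((l * (D + s * V) - Real.log c + s ^ 2 * V) / Real.log 2 : ℝ) : EReal) := by
      unfold wCost
      rw [if_pos (Filter.Eventually.of_forall hwQ), EReal.coe_le_coe_iff]
      have hi1 : Integrable (fun x => l * (m x + s * v x)) P := (hmi.add (hvi.const_mul s)).const_mul l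
      have hi2 : Integrable (fun x => l * (m x + s * v x) - Real.log c) P :=
        hi1.sub (integrable_const _)
      have hi3 : Integrable (fun x => s ^ 2 * v x) P := hvi.const_mul _
      have hint : ∫ x, (l * (m x + s * v x) - Real.log c + s ^ 2 * v x) / Real.log 2 ∂P =
          (l * (D + s * V) - Real.log c + s ^ 2 * V) / Real.log 2 := by
        rw [integral_div, integral_add hi2 hi3, integral_sub hi1 (integrable_const _),
          integral_const_mul, integral_const_mul, integral_add hmi (hvi.const_mul s),
          integral_const_mul, ← hDm]
        simp [hV]
      rw [← hint]
      apply integral_mono_of_nonneg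
      · exact Filter.Eventually.of_forall fun x => aux_kl _ _ (hw0 x) (hws x) hQ (hwQ x)
      · exact (hi2.add hi3).div_const _
      · filter_upwards [hc] with x hx
        have := (hcost x).2
        rw [hx] at this
        exact this
    have hle2 := hle.trans hwc
    have h0 := aux_RofD_nonneg P ρ (D + s * V)
    have h1 := EReal.toReal_le_toReal hle2 (by
      intro h; rw [h] at h0; simp at h0) (EReal.coe_ne_top _)
    rw [EReal.toReal_coe, le_div_iff₀ hlog2] at h1
    simp only [hf]
    linarith
  have hmin : IsLocalMin (fun s : ℝ => l * (D + s * V) - Real.log c + s ^ 2 * V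
      - Real.log 2 * f (D + s * V)) 0 := by
    have hev : ∀ᶠ s : ℝ in nhds 0, |s| * M < 1 := by
      have : ContinuousAt (fun s : ℝ => |s| * M) 0 := by fun_prop
      apply this.eventually_lt continuousAt_const
      simp
    filter_upwards [hev] with s hs
    have := hub s hs
    simp only [zero_mul, add_zero, hfD]
    linarith
  have hd1 : HasDerivAt (fun s : ℝ => D + s * V) V 0 := by
    simpa using ((hasDerivAt_id (0:ℝ)).mul_const V).const_add D
  have hd2 : HasDerivAt (fun s : ℝ => f (D + s * V)) (deriv f D * V) 0 := by
    have h1 : HasDerivAt f (deriv f D) (D + 0 * V) := by simpa using hdiff.hasDerivAt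
    exact h1.comp (0:ℝ) hd1
  have hd3 : HasDerivAt (fun s : ℝ => s ^ 2 * V) 0 0 := by
    simpa using ((hasDerivAt_id (0:ℝ)).pow 2).mul_const V
  have hd := (((hd1.const_mul l).sub_const (Real.log c)).add hd3).sub (hd2.const_mul (Real.log 2))
  have hz := hmin.hasDerivAt_eq_zero hd
  have : (l - Real.log 2 * deriv f D) * V = 0 := by linarith
  have := (mul_eq_zero.1 this).resolve_right hVpos.ne'
  linarith

/-- **Corollary 2.** If `R(D)` is differentiable and strictly convex on `(0, D_max)`
and there are distinct points `x_0,…,x_k` in `I` satisfying condition (a) or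
condition (b) of Theorem 3, then the degeneracy condition holds at only finitely
many `D ∈ (0, D_max)`. -/
theorem stmt_7 {k : ℕ} (hk : 0 < k) (M : ℝ)
    (ρ : ℝ → Fin k → ℝ) (hρmeas : ∀ j, Measurable fun x => ρ x j)
    (hρnn : ∀ x j, 0 ≤ ρ x j) (hρM : ∀ x j, ρ x j ≤ M)
    (hρmin : ∀ x, ∃ j, ρ x j = 0)
    (P : Measure ℝ) [IsProbabilityMeasure P]
    (a b : ℝ) (hab : a < b)
    (g : ℝ → ℝ) (hg : Measurable g) (hgpos : ∀ x ∈ Set.Ioo a b, 0 < g x)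
    (habs : ∀ s ⊆ Set.Ioo a b, MeasurableSet s → ENNReal.ofReal (∫ x in s, g x) ≤ P s)
    (hcont : ∀ j, ContinuousOn (fun x => ρ x j) (Set.Ioo a b))
    (hDmax : 0 < Dmax P ρ)
    (r : Fin (k + 1) → ℝ → ℝ)
    (hr0 : ∀ x, r 0 x = 0)
    (hrsucc : ∀ (j : Fin k) (x : ℝ), r j.succ x = ρ x j)
    (hdiff : ∀ D ∈ Set.Ioo 0 (Dmax P ρ),
      DifferentiableAt ℝ (fun t => (RofD P ρ t).toReal) D)
    (hconv : StrictConvexOn ℝ (Set.Ioo 0 (Dmax P ρ)) (fun t => (RofD P ρ t).toReal))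
    (hcond : ∃ pts : Fin (k + 1) → ℝ, (∀ j, pts j ∈ Set.Ioo a b) ∧
      Function.Injective pts ∧
      ((∀ i j : Fin (k + 1), i ≠ j → j ≠ 0 → r j (pts i) < r j (pts j)) ∨
       (∀ perm : Equiv.Perm (Fin (k + 1)), perm ≠ 1 →
          ∑ j, r j (pts j) ≠ ∑ j, r j (pts (perm j))))) :
    {D ∈ Set.Ioo 0 (Dmax P ρ) | DegenAt P ρ D}.Finite := by
  obtain ⟨pts, hpts, -, hcond⟩ := hcond
  have hB : ∀ perm : Equiv.Perm (Fin (k + 1)), perm ≠ 1 →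
      ∑ j, r j (pts j) ≠ ∑ j, r j (pts (perm j)) := by
    rcases hcond with h | h
    · intro σ hσ
      obtain ⟨j, hj, hj0⟩ : ∃ j, σ j ≠ j ∧ j ≠ 0 := by
        obtain ⟨i, hi⟩ : ∃ i, σ i ≠ i := by
          by_contra! h'
          exact hσ (Equiv.ext h')
        by_cases hi0 : i = 0
        · exact ⟨σ i, fun h' => hi (σ.injective h'), fun h' => hi (h'.trans hi0.symm)⟩
        · exact ⟨i, hi, hi0⟩
      apply ne_of_gt
      apply Finset.sum_lt_sum
      · intro i _
        by_cases hi0 : i = 0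
        · rw [hi0, hr0, hr0]
        · by_cases hi : σ i = i
          · rw [hi]
          · exact (h _ _ hi hi0).le
      · exact ⟨j, Finset.mem_univ _, h _ _ hj hj0⟩
    · exact h
  have hfin := aux_det (fun i j => r j (pts i)) hB
  set f : ℝ → ℝ := fun t => (RofD P ρ t).toReal with hf
  have hmono := hconv.strictMonoOn_deriv hdiff
  apply Set.Finite.of_finite_image (f := fun D => Real.log 2 * deriv f D)
  · apply hfin.subset
    rintro _ ⟨D, ⟨hD, Q, hQ, -, l, -, hder, hval, c, hc⟩, rfl⟩
    have hl := aux_main M ρ hρmeas hρnn hρM P Q hQ l D c hD.2 hder hval hc (hdiff D hD)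
    simp only [hf]
    rw [hl]
    have hall : ∀ x ∈ Set.Ioo a b, ∑ j, Q j * Real.exp (l * ρ x j) = c := by
      by_contra! hex
      obtain ⟨x0, hx0, hne⟩ := hex
      have hco : ContinuousOn (fun x => ∑ j, Q j * Real.exp (l * ρ x j)) (Set.Ioo a b) := by
        apply continuousOn_finsetSum
        intro j _
        exact continuousOn_const.mul (continuousOn_const.mul (hcont j)).rexp
      have hopen := hco.isOpen_inter_preimage isOpen_Ioo (isOpen_compl_singleton (x := c))
      apply aux_pos P a b g hg hgpos habs _ hopen Set.inter_subset_left ⟨x0, hx0, hne⟩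
      exact measure_mono_null Set.inter_subset_right hc
    show (Matrix.of fun i j => Real.exp (l * r j (pts i))).det = 0
    rw [← Matrix.exists_mulVec_eq_zero_iff]
    refine ⟨Fin.cons (-c) Q, ?_, ?_⟩
    · intro h0
      have : ∀ j, Q j = 0 := fun j => by simpa using congrFun h0 j.succ
      have h1 := hQ.2
      simp [this] at h1
    · ext i
      have := hall (pts i) (hpts i)
      simp only [Matrix.mulVec, dotProduct, Matrix.of_apply, Fin.sum_univ_succ, Fin.cons_zero,
        Fin.cons_succ, hr0, hrsucc, Pi.zero_apply, mul_zero, Real.exp_zero]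
      rw [← this]
      simp only [mul_comm (Real.exp _)]
      ring
  · intro D1 h1 D2 h2 h12
    exact hmono.injOn h1.1 h2.1 (mul_left_cancel₀ (Real.log_pos (by norm_num : (1:ℝ) < 2)).ne' h12)
end

section
/- For every probability mass function Q on Â and every D ≥ 0, R(P,Q,D) = (log₂ e)·Λ*_{P,Q}(D). -/
open Real MeasureTheory Finset
open scoped Classical

/-- `D_min^{P,Q} = E_P[min_{a ∈ supp Q} ρ(X,a)]`. -/
noncomputable def DminPQ {k : ℕ} (P : Measure ℝ) (ρ : ℝ → Fin k → ℝ)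
    (Q : Fin k → ℝ) : ℝ :=
  ∫ x, (⨅ j : {j : Fin k // 0 < Q j}, ρ x (j : Fin k)) ∂P

/-- `D_max^{P,Q} = Σ_j Q_j · E_P[ρ(X,a_j)]`. -/
noncomputable def DmaxPQ {k : ℕ} (P : Measure ℝ) (ρ : ℝ → Fin k → ℝ)
    (Q : Fin k → ℝ) : ℝ :=
  ∑ j, Q j * ∫ x, ρ x j ∂P

/-- The Fenchel–Legendre transform `Λ*_{P,Q}(D) = sup_{λ ≤ 0} [λ·D − Λ_{P,Q}(λ)]`. -/
noncomputable def LamStar {k : ℕ} (P : Measure ℝ) (ρ : ℝ → Fin k → ℝ)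
    (Q : Fin k → ℝ) (D : ℝ) : EReal :=
  ⨆ l ∈ Set.Iic (0 : ℝ), ((l * D - Lam P ρ Q l : ℝ) : EReal)

noncomputable def hZ {k : ℕ} (Q : Fin k → ℝ) (r : Fin k → ℝ) (l : ℝ) : ℝ :=
  ∑ j, Q j * Real.exp (l * r j)

noncomputable def hT {k : ℕ} (Q : Fin k → ℝ) (r : Fin k → ℝ) (l : ℝ) (j : Fin k) : ℝ :=
  Q j * Real.exp (l * r j) / hZ Q r l

noncomputable def hH {k : ℕ} (Q : Fin k → ℝ) (v : Fin k → ℝ) : ℝ :=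
  ∑ j, (v j * Real.log (v j) - v j * Real.log (Q j))

lemma exists_pos_of_pmf {k : ℕ} {Q : Fin k → ℝ} (hQ : IsPmf Q) : ∃ j, 0 < Q j := by
  by_contra! h
  have : ∑ j, Q j ≤ 0 := Finset.sum_nonpos (fun j _ => h j)
  rw [hQ.2] at this
  linarith

lemma hZ_pos {k : ℕ} {Q : Fin k → ℝ} (hQ : IsPmf Q) (r : Fin k → ℝ) (l : ℝ) :
    0 < hZ Q r l := by
  obtain ⟨j, hj⟩ := exists_pos_of_pmf hQ
  exact Finset.sum_pos' (fun i _ => mul_nonneg (hQ.1 i) (Real.exp_pos _).le)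
    ⟨j, Finset.mem_univ _, mul_pos hj (Real.exp_pos _)⟩

lemma hT_nonneg {k : ℕ} {Q : Fin k → ℝ} (hQ : IsPmf Q) (r : Fin k → ℝ) (l : ℝ) (j : Fin k) :
    0 ≤ hT Q r l j :=
  div_nonneg (mul_nonneg (hQ.1 j) (Real.exp_pos _).le) (hZ_pos hQ r l).le

lemma hT_sum {k : ℕ} {Q : Fin k → ℝ} (hQ : IsPmf Q) (r : Fin k → ℝ) (l : ℝ) :
    ∑ j, hT Q r l j = 1 := by
  unfold hT
  rw [← Finset.sum_div]
  exact div_self (hZ_pos hQ r l).ne'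

lemma hT_pos {k : ℕ} {Q : Fin k → ℝ} (hQ : IsPmf Q) (r : Fin k → ℝ) (l : ℝ) {j : Fin k}
    (hj : 0 < Q j) : 0 < hT Q r l j :=
  div_pos (mul_pos hj (Real.exp_pos _)) (hZ_pos hQ r l)

lemma log_hT {k : ℕ} {Q : Fin k → ℝ} (hQ : IsPmf Q) (r : Fin k → ℝ) (l : ℝ) {j : Fin k}
    (hj : 0 < Q j) :
    Real.log (hT Q r l j) = Real.log (Q j) + l * r j - Real.log (hZ Q r l) := by
  unfold hT
  rw [Real.log_div (mul_pos hj (Real.exp_pos _)).ne' (hZ_pos hQ r l).ne',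
    Real.log_mul hj.ne' (Real.exp_pos _).ne', Real.log_exp]

lemma hT_zero {k : ℕ} {Q : Fin k → ℝ} (r : Fin k → ℝ) (l : ℝ) {j : Fin k}
    (hj : Q j = 0) : hT Q r l j = 0 := by
  simp [hT, hj]

/-- Value of the entropy at a tilted distribution. -/
lemma hH_tilt {k : ℕ} {Q : Fin k → ℝ} (hQ : IsPmf Q) (r : Fin k → ℝ) (l : ℝ) :
    hH Q (hT Q r l) = l * ∑ j, hT Q r l j * r j - Real.log (hZ Q r l) := by
  have h1 : Real.log (hZ Q r l) = ∑ j, hT Q r l j * Real.log (hZ Q r l) := by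
    rw [← Finset.sum_mul, hT_sum hQ, one_mul]
  rw [h1, Finset.mul_sum, ← Finset.sum_sub_distrib]
  unfold hH
  refine Finset.sum_congr rfl fun j _ => ?_
  rcases (hQ.1 j).eq_or_lt with hj | hj
  · simp [hT_zero r l hj.symm]
  · rw [log_hT hQ r l hj]; ring

/-- Gibbs inequality. -/
lemma gibbs {k : ℕ} {Q : Fin k → ℝ} (hQ : IsPmf Q) (r : Fin k → ℝ) (l : ℝ)
    (v : Fin k → ℝ) (hv : ∀ j, 0 ≤ v j) (hv1 : ∑ j, v j = 1) (hvQ : ∀ j, 0 < v j → 0 < Q j) :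
    l * ∑ j, v j * r j - Real.log (hZ Q r l) ≤ hH Q v := by
  have key : ∀ j, v j * (l * r j) - v j * Real.log (hZ Q r l) -
      (v j * Real.log (v j) - v j * Real.log (Q j)) ≤ hT Q r l j - v j := by
    intro j
    rcases (hv j).eq_or_lt with hj | hj
    · rw [← hj]; simpa using hT_nonneg hQ r l j
    · have hq := hvQ j hj
      have ht := hT_pos hQ r l hq
      have h2 := Real.log_le_sub_one_of_pos (div_pos ht hj)
      rw [Real.log_div ht.ne' hj.ne', log_hT hQ r l hq] at h2
      have h3 := mul_le_mul_of_nonneg_left h2 hj.le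
      have h4 : v j * (hT Q r l j / v j - 1) = hT Q r l j - v j := by
        field_simp
      rw [h4] at h3
      linarith
  have hs := Finset.sum_le_sum (s := Finset.univ) fun j _ => key j
  simp only [Finset.sum_sub_distrib] at hs
  rw [hT_sum hQ, hv1, ← Finset.sum_mul, hv1] at hs
  unfold hH
  rw [Finset.sum_sub_distrib, Finset.mul_sum]
  have : ∀ j, v j * (l * r j) = l * (v j * r j) := fun j => by ring
  simp only [this] at hs
  linarith

lemma hH_nonneg {k : ℕ} {Q : Fin k → ℝ} (hQ : IsPmf Q)
    (v : Fin k → ℝ) (hv : ∀ j, 0 ≤ v j) (hv1 : ∑ j, v j = 1) (hvQ : ∀ j, 0 < v j → 0 < Q j) :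
    0 ≤ hH Q v := by
  have := gibbs hQ (fun _ => 0) 0 v hv hv1 hvQ
  simpa [hZ, hQ.2] using this

lemma hH_cont {k : ℕ} (Q : Fin k → ℝ) : Continuous (hH Q) := by
  unfold hH
  refine continuous_finset_sum _ fun j _ => ?_
  exact (Real.continuous_mul_log.comp (continuous_apply j)).sub
    ((continuous_apply j).mul continuous_const)

lemma hH_bdd {k : ℕ} (Q : Fin k → ℝ) : ∃ C, ∀ v : Fin k → ℝ, (∀ j, 0 ≤ v j) → ∑ j, v j = 1 →
    ‖hH Q v‖ ≤ C := by
  obtain ⟨C, hC⟩ := (isCompact_Icc (a := (0 : Fin k → ℝ)) (b := 1)).exists_bound_of_continuousOn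
    (hH_cont Q).continuousOn
  refine ⟨C, fun v hv hv1 => hC v ⟨fun j => hv j, fun j => ?_⟩⟩
  rw [Pi.one_apply, ← hv1]
  exact Finset.single_le_sum (fun i _ => hv i) (Finset.mem_univ j)

lemma tilt_limit {k : ℕ} {Q : Fin k → ℝ} (hQ : IsPmf Q) (r : Fin k → ℝ) :
    ∃ v : Fin k → ℝ, Filter.Tendsto (fun n : ℕ => hT Q r (-(n : ℝ))) Filter.atTop (nhds v) := by
  obtain ⟨j0, hj0⟩ := exists_pos_of_pmf hQ
  obtain ⟨m, hm, hmin⟩ := Finset.exists_min_image (Finset.univ.filter fun j => 0 < Q j) r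
    ⟨j0, by simpa using hj0⟩
  simp only [Finset.mem_filter, Finset.mem_univ, true_and] at hm hmin
  have hlim : ∀ j, Filter.Tendsto (fun n : ℕ => Q j * Real.exp (-(n : ℝ) * (r j - r m)))
      Filter.atTop (nhds (if r j = r m then Q j else 0)) := by
    intro j
    rcases (hQ.1 j).eq_or_lt with hj | hj
    · simp [← hj]
    · split_ifs with h
      · simp [h]
      · have hlt : 0 < r j - r m := sub_pos.2 (lt_of_le_of_ne (hmin j hj) (Ne.symm h))
        have h1 : Filter.Tendsto (fun n : ℕ => -(n : ℝ) * (r j - r m)) Filter.atTop Filter.atBot :=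
          (Filter.tendsto_neg_atTop_atBot.comp tendsto_natCast_atTop_atTop).atBot_mul_const hlt
        simpa using (Real.tendsto_exp_atBot.comp h1).const_mul (Q j)
  have hS := tendsto_finset_sum Finset.univ fun j _ => hlim j
  have hpos : 0 < ∑ j, (if r j = r m then Q j else 0) :=
    Finset.sum_pos' (fun i _ => by split_ifs; exacts [hQ.1 i, le_rfl])
      ⟨m, Finset.mem_univ _, by simpa using hm⟩
  refine ⟨_, tendsto_pi_nhds.2 fun j => ((hlim j).div hS hpos.ne').congr fun n => ?_⟩
  have e : ∀ i, Q i * Real.exp (-(n : ℝ) * (r i - r m)) =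
      Q i * Real.exp (-(n : ℝ) * r i) * Real.exp ((n : ℝ) * r m) := by
    intro i
    rw [mul_assoc, ← Real.exp_add]; congr 2; ring
  simp only [Pi.div_apply, e, ← Finset.sum_mul]
  rw [mul_div_mul_right _ _ (Real.exp_pos _).ne']
  rfl

section meas

variable {k : ℕ} {A : Set ℝ} {P : Measure ℝ} [IsProbabilityMeasure P] {M : ℝ}
  {ρ : ℝ → Fin k → ℝ} {Q : Fin k → ℝ}

lemma dist_bound (hρnn : ∀ x ∈ A, ∀ j, 0 ≤ ρ x j) (hρM : ∀ x ∈ A, ∀ j, ρ x j ≤ M)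
    {x : ℝ} (hx : x ∈ A) (v : Fin k → ℝ) (hv : ∀ j, 0 ≤ v j) (hv1 : ∑ j, v j = 1) :
    ‖∑ j, v j * ρ x j‖ ≤ M := by
  rw [Real.norm_of_nonneg (Finset.sum_nonneg fun j _ => mul_nonneg (hv j) (hρnn x hx j))]
  calc ∑ j, v j * ρ x j ≤ ∑ j, v j * M :=
        Finset.sum_le_sum fun j _ => mul_le_mul_of_nonneg_left (hρM x hx j) (hv j)
    _ = M := by rw [← Finset.sum_mul, hv1, one_mul]

lemma dist_meas (hρmeas : ∀ j, Measurable fun x => ρ x j) {w : ℝ → Fin k → ℝ}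
    (hw : Measurable w) : Measurable fun x => ∑ j, w x j * ρ x j :=
  Finset.measurable_sum _ fun j _ => ((measurable_pi_apply j).comp hw).mul (hρmeas j)

lemma dist_int (hρmeas : ∀ j, Measurable fun x => ρ x j) (hae : ∀ᵐ x ∂P, x ∈ A)
    (hρnn : ∀ x ∈ A, ∀ j, 0 ≤ ρ x j) (hρM : ∀ x ∈ A, ∀ j, ρ x j ≤ M)
    {w : ℝ → Fin k → ℝ} (hw : Measurable w) (hv : ∀ x j, 0 ≤ w x j)
    (hv1 : ∀ x, ∑ j, w x j = 1) : Integrable (fun x => ∑ j, w x j * ρ x j) P :=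
  Integrable.of_bound (dist_meas hρmeas hw).aestronglyMeasurable M
    (hae.mono fun x hx => dist_bound hρnn hρM hx _ (hv x) (hv1 x))

lemma hH_int {w : ℝ → Fin k → ℝ} (hw : Measurable w) (hv : ∀ x j, 0 ≤ w x j)
    (hv1 : ∀ x, ∑ j, w x j = 1) : Integrable (fun x => hH Q (w x)) P := by
  obtain ⟨C, hC⟩ := hH_bdd Q
  exact Integrable.of_bound ((hH_cont Q).measurable.comp hw).aestronglyMeasurable C
    (Filter.Eventually.of_forall fun x => hC _ (hv x) (hv1 x))

lemma hT_meas (hρmeas : ∀ j, Measurable fun x => ρ x j) (l : ℝ) :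
    Measurable fun x => hT Q (ρ x) l := by
  refine measurable_pi_lambda _ fun j => ?_
  unfold hT hZ
  refine Measurable.div ?_ (Finset.measurable_sum _ fun i _ => ?_)
  · exact ((hρmeas j).const_mul l).exp.const_mul _
  · exact ((hρmeas i).const_mul l).exp.const_mul _

lemma hT_cont (hQ : IsPmf Q) (r : Fin k → ℝ) : Continuous fun l => hT Q r l := by
  refine continuous_pi fun j => ?_
  unfold hT
  refine Continuous.div (by fun_prop) ?_ fun l => (hZ_pos hQ r l).ne'
  unfold hZ
  fun_prop

lemma wCost_eq (w : ℝ → Fin k → ℝ) (hv : ∀ x j, 0 ≤ w x j)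
    (h : ∀ᵐ x ∂P, ∀ j, 0 < w x j → 0 < Q j) :
    wCost P Q w = ((Real.logb 2 (Real.exp 1) * ∫ x, hH Q (w x) ∂P : ℝ) : EReal) := by
  unfold wCost
  rw [if_pos h, ← integral_const_mul]
  congr 1
  refine integral_congr_ae (h.mono fun x hx => ?_)
  simp only [hH, Finset.mul_sum]
  refine Finset.sum_congr rfl fun j _ => ?_
  rcases (hv x j).eq_or_lt with hj | hj
  · simp [← hj]
  · simp only [Real.logb]
    rw [Real.log_div hj.ne' (hx j hj).ne', Real.log_exp]
    ring

lemma logZ_int (hQ : IsPmf Q) (hρmeas : ∀ j, Measurable fun x => ρ x j) (hae : ∀ᵐ x ∂P, x ∈ A)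
    (hρnn : ∀ x ∈ A, ∀ j, 0 ≤ ρ x j) (hρM : ∀ x ∈ A, ∀ j, ρ x j ≤ M) (l : ℝ) :
    Integrable (fun x => Real.log (hZ Q (ρ x) l)) P := by
  have h1 := (dist_int hρmeas hae hρnn hρM (hT_meas (Q := Q) hρmeas l)
    (fun x => hT_nonneg hQ (ρ x) l) (fun x => hT_sum hQ (ρ x) l)).const_mul l
  have h2 : Integrable (fun x => hH Q (hT Q (ρ x) l)) P := hH_int (hT_meas (Q := Q) hρmeas l)
    (fun x => hT_nonneg hQ (ρ x) l) (fun x => hT_sum hQ (ρ x) l)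
  refine (h1.sub h2).congr (Filter.Eventually.of_forall fun x => ?_)
  simp only [Pi.sub_apply, hH_tilt hQ]
  ring

lemma int_tilt (hQ : IsPmf Q) (hρmeas : ∀ j, Measurable fun x => ρ x j) (hae : ∀ᵐ x ∂P, x ∈ A)
    (hρnn : ∀ x ∈ A, ∀ j, 0 ≤ ρ x j) (hρM : ∀ x ∈ A, ∀ j, ρ x j ≤ M) (l : ℝ) :
    ∫ x, hH Q (hT Q (ρ x) l) ∂P =
      l * (∫ x, ∑ j, hT Q (ρ x) l j * ρ x j ∂P) - Lam P ρ Q l := by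
  have h1 := (dist_int hρmeas hae hρnn hρM (hT_meas (Q := Q) hρmeas l)
    (fun x => hT_nonneg hQ (ρ x) l) (fun x => hT_sum hQ (ρ x) l)).const_mul l
  have h2 := logZ_int hQ hρmeas hae hρnn hρM l
  simp only [hH_tilt hQ]
  rw [integral_sub h1 h2, integral_const_mul]
  rfl

lemma lower (hQ : IsPmf Q) (hρmeas : ∀ j, Measurable fun x => ρ x j) (hae : ∀ᵐ x ∂P, x ∈ A)
    (hρnn : ∀ x ∈ A, ∀ j, 0 ≤ ρ x j) (hρM : ∀ x ∈ A, ∀ j, ρ x j ≤ M) (l : ℝ)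
    {w : ℝ → Fin k → ℝ} (hw : Measurable w) (hv : ∀ x j, 0 ≤ w x j)
    (hv1 : ∀ x, ∑ j, w x j = 1) (h : ∀ᵐ x ∂P, ∀ j, 0 < w x j → 0 < Q j) :
    l * (∫ x, ∑ j, w x j * ρ x j ∂P) - Lam P ρ Q l ≤ ∫ x, hH Q (w x) ∂P := by
  have h1 := (dist_int hρmeas hae hρnn hρM hw hv hv1).const_mul l
  have h2 := logZ_int hQ hρmeas hae hρnn hρM l
  have h3 := integral_sub h1 h2
  rw [integral_const_mul] at h3
  change _ = l * (∫ x, ∑ j, w x j * ρ x j ∂P) - Lam P ρ Q l at h3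
  rw [← h3]
  exact integral_mono_ae (h1.sub h2) (hH_int hw hv hv1)
    (h.mono fun x hx => gibbs hQ (ρ x) l (w x) (hv x) (hv1 x) hx)

lemma upper (hQ : IsPmf Q) (hρmeas : ∀ j, Measurable fun x => ρ x j) (hae : ∀ᵐ x ∂P, x ∈ A)
    (hρnn : ∀ x ∈ A, ∀ j, 0 ≤ ρ x j) (hρM : ∀ x ∈ A, ∀ j, ρ x j ≤ M) (D : ℝ) :
    (LamStar P ρ Q D = ⊤) ∨ ∃ w : ℝ → Fin k → ℝ, Measurable w ∧ (∀ x j, 0 ≤ w x j) ∧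
      (∀ x, ∑ j, w x j = 1) ∧ (∫ x, ∑ j, w x j * ρ x j ∂P ≤ D) ∧
      (∀ x j, 0 < w x j → 0 < Q j) ∧ ((∫ x, hH Q (w x) ∂P : ℝ) : EReal) ≤ LamStar P ρ Q D := by
  set d : ℝ → ℝ := fun l => ∫ x, ∑ j, hT Q (ρ x) l j * ρ x j ∂P with hd
  have hle : ∀ l : ℝ, l ≤ 0 → ((l * D - Lam P ρ Q l : ℝ) : EReal) ≤ LamStar P ρ Q D :=
    fun l hl => le_iSup₂_of_le l hl le_rfl
  have hcost : ∀ l, ∫ x, hH Q (hT Q (ρ x) l) ∂P = l * d l - Lam P ρ Q l :=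
    int_tilt hQ hρmeas hae hρnn hρM
  have hTQ : ∀ x l j, 0 < hT Q (ρ x) l j → 0 < Q j := by
    intro x l j hj
    rcases (hQ.1 j).eq_or_lt with h | h
    · rw [hT_zero _ _ h.symm] at hj; exact absurd hj (lt_irrefl _)
    · exact h
  have hdc : Continuous d := by
    refine continuous_of_dominated (bound := fun _ => M)
      (fun l => (dist_meas hρmeas (hT_meas hρmeas l)).aestronglyMeasurable)
      (fun l => hae.mono fun x hx => dist_bound hρnn hρM hx _ (hT_nonneg hQ _ l) (hT_sum hQ _ l))
      (integrable_const M) (Filter.Eventually.of_forall fun x => ?_)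
    exact continuous_finset_sum _ fun j _ =>
      ((continuous_apply j).comp (hT_cont hQ (ρ x))).mul continuous_const
  by_cases h0 : d 0 ≤ D
  · right
    refine ⟨fun x => hT Q (ρ x) 0, hT_meas hρmeas 0, fun x => hT_nonneg hQ _ 0,
      fun x => hT_sum hQ _ 0, h0, fun x => hTQ x 0, ?_⟩
    rw [hcost]
    simpa using hle 0 le_rfl
  push Not at h0
  by_cases h1 : ∃ l ≤ 0, d l ≤ D
  · right
    obtain ⟨l, hl, hlD⟩ := h1
    obtain ⟨t, ht, htD⟩ := intermediate_value_Icc hl hdc.continuousOn ⟨hlD, h0.le⟩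
    refine ⟨fun x => hT Q (ρ x) t, hT_meas hρmeas t, fun x => hT_nonneg hQ _ t,
      fun x => hT_sum hQ _ t, htD.le, fun x => hTQ x t, ?_⟩
    rw [hcost, htD]
    exact hle t ht.2
  push Not at h1
  choose v hv using fun x => tilt_limit hQ (ρ x)
  have hvj : ∀ x j, Filter.Tendsto (fun n : ℕ => hT Q (ρ x) (-(n : ℝ)) j) Filter.atTop
      (nhds (v x j)) := fun x j => (tendsto_pi_nhds.1 (hv x)) j
  have hvm : Measurable v := measurable_of_tendsto_metrizable
    (fun n : ℕ => hT_meas (Q := Q) hρmeas (-(n : ℝ))) (tendsto_pi_nhds.2 hv)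
  have hv0 : ∀ x j, 0 ≤ v x j := fun x j =>
    ge_of_tendsto' (hvj x j) fun n => hT_nonneg hQ _ _ j
  have hv1 : ∀ x, ∑ j, v x j = 1 := fun x =>
    tendsto_nhds_unique (tendsto_finset_sum Finset.univ fun j _ => hvj x j)
      (by simp only [hT_sum hQ]; exact tendsto_const_nhds)
  have hvQ : ∀ x j, 0 < v x j → 0 < Q j := by
    intro x j hj
    rcases (hQ.1 j).eq_or_lt with h | h
    · have := hvj x j
      simp only [hT_zero _ _ h.symm] at this
      have := tendsto_nhds_unique this tendsto_const_nhds
      linarith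
    · exact h
  have hdlim : Filter.Tendsto (fun n : ℕ => d (-(n : ℝ))) Filter.atTop
      (nhds (∫ x, ∑ j, v x j * ρ x j ∂P)) := by
    refine tendsto_integral_of_dominated_convergence (fun _ => M)
      (fun n => (dist_meas hρmeas (hT_meas hρmeas _)).aestronglyMeasurable) (integrable_const M)
      (fun n => hae.mono fun x hx => dist_bound hρnn hρM hx _ (hT_nonneg hQ _ _) (hT_sum hQ _ _))
      (Filter.Eventually.of_forall fun x => ?_)
    exact tendsto_finset_sum _ fun j _ => (hvj x j).mul_const _
  have hneg : ∀ n : ℕ, -(n : ℝ) ≤ 0 := fun n => neg_nonpos.2 (Nat.cast_nonneg n)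
  by_cases h2 : ∫ x, ∑ j, v x j * ρ x j ∂P ≤ D
  · right
    refine ⟨v, hvm, hv0, hv1, h2, hvQ, ?_⟩
    obtain ⟨C, hC⟩ := hH_bdd Q
    have hHlim : Filter.Tendsto (fun n : ℕ => ∫ x, hH Q (hT Q (ρ x) (-(n : ℝ))) ∂P) Filter.atTop
        (nhds (∫ x, hH Q (v x) ∂P)) := by
      refine tendsto_integral_of_dominated_convergence (fun _ => C)
        (fun n => ((hH_cont Q).measurable.comp (hT_meas hρmeas _)).aestronglyMeasurable)
        (integrable_const C)
        (fun n => Filter.Eventually.of_forall fun x => hC _ (hT_nonneg hQ _ _) (hT_sum hQ _ _))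
        (Filter.Eventually.of_forall fun x => ?_)
      exact ((hH_cont Q).tendsto _).comp (hv x)
    refine le_of_tendsto' ((continuous_coe_real_ereal.tendsto _).comp hHlim) fun n => ?_
    refine le_trans ?_ (hle _ (hneg n))
    simp only [Function.comp_apply]
    rw [hcost]
    refine EReal.coe_le_coe_iff.2 ?_
    have := mul_le_mul_of_nonpos_left (h1 _ (hneg n)).le (hneg n)
    linarith
  · left
    push Not at h2
    set L := ∫ x, ∑ j, v x j * ρ x j ∂P
    have ht : Filter.Tendsto (fun n : ℕ => (n : ℝ) * (d (-(n : ℝ)) - D)) Filter.atTop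
        Filter.atTop :=
      tendsto_natCast_atTop_atTop.atTop_mul_pos (sub_pos.2 h2) (hdlim.sub_const D)
    rw [EReal.eq_top_iff_forall_lt]
    intro y
    obtain ⟨n, hn⟩ := (ht.eventually_gt_atTop y).exists
    refine lt_of_lt_of_le (EReal.coe_lt_coe_iff.2 ?_) (hle _ (hneg n))
    have hc := hcost (-(n : ℝ))
    have hnn : 0 ≤ ∫ x, hH Q (hT Q (ρ x) (-(n : ℝ))) ∂P :=
      integral_nonneg fun x => hH_nonneg hQ _ (hT_nonneg hQ _ _) (hT_sum hQ _ _) (hTQ x _)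
    rw [hc] at hnn
    linarith

end meas

/-- **Proposition 1(ii).** For every pmf `Q` and every `D ≥ 0`,
`R(P,Q,D) = (log₂ e) · Λ*_{P,Q}(D)`. -/
theorem stmt_11 {k : ℕ} (hk : 0 < k) (A : Set ℝ) (hA : MeasurableSet A)
    (P : Measure ℝ) [IsProbabilityMeasure P] (hsupp : P Aᶜ = 0)
    (M : ℝ) (ρ : ℝ → Fin k → ℝ) (hρmeas : ∀ j, Measurable fun x => ρ x j)
    (hρnn : ∀ x ∈ A, ∀ j, 0 ≤ ρ x j) (hρM : ∀ x ∈ A, ∀ j, ρ x j ≤ M)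
    (hρmin : ∀ x ∈ A, ∃ j, ρ x j = 0)
    (Q : Fin k → ℝ) (hQ : IsPmf Q) (D : ℝ) (hD : 0 ≤ D) :
    RPQ P ρ Q D = ((Real.logb 2 (Real.exp 1) : ℝ) : EReal) * LamStar P ρ Q D := by
  have hae : ∀ᵐ x ∂P, x ∈ A := by rw [ae_iff]; exact hsupp
  have hc : 0 < Real.logb 2 (Real.exp 1) :=
    Real.logb_pos (by norm_num) (Real.one_lt_exp_iff.2 one_pos)
  have hc' : (0 : EReal) ≤ ((Real.logb 2 (Real.exp 1) : ℝ) : EReal) :=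
    EReal.coe_nonneg.2 hc.le
  apply le_antisymm
  · rcases upper hQ hρmeas hae hρnn hρM D with h | ⟨w, hw, hv, hv1, hwD, hwQ, hle⟩
    · rw [h, EReal.coe_mul_top_of_pos hc]
      exact le_top
    · refine iInf₂_le_of_le w ⟨hw, hv, hv1, hwD⟩ ?_
      rw [wCost_eq w hv (Filter.Eventually.of_forall hwQ), EReal.coe_mul]
      exact mul_le_mul_of_nonneg_left hle hc'
  · refine le_iInf₂ fun w hw => ?_
    obtain ⟨hw, hv, hv1, hwD⟩ := hw
    by_cases h : ∀ᵐ x ∂P, ∀ j, 0 < w x j → 0 < Q j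
    · rw [wCost_eq w hv h, EReal.coe_mul]
      refine mul_le_mul_of_nonneg_left (iSup₂_le fun l hl => EReal.coe_le_coe_iff.2 ?_) hc'
      have h1 := lower hQ hρmeas hae hρnn hρM l hw hv hv1 h
      have h2 := mul_le_mul_of_nonpos_left hwD (Set.mem_Iic.1 hl)
      linarith
    · unfold wCost
      rw [if_neg h]
      exact le_top
end
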